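/- arXiv:1808.04791 — 3 statements merged into one kernel-verified Lean document; each statement's English description precedes it below -/
import Mathlib

section
/- For all α, β, γ : Fin χ, the second response coefficients satisfy D[(α); (β, γ)] f + D[(α); (β, γ)] g = − D[(α, β); (γ)] f − D[(α, γ); (β)] g; that is, Q_{α,βγ}(B) + Q_{α,βγ}(−B) = − Q_{αβ,γ}(B) − Q_{αγ,β}(−B). -/
/-- Partial derivative of `F (λ, A)` with respect to the counting parameter `λ_i`. -/
noncomputable def pderivLam {χ : ℕ} (i : Fin χ)
    (F : (Fin χ → ℝ) → (Fin χ → ℝ) → ℝ) : (Fin χ → ℝ) → (Fin χ → ℝ) → ℝ :=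
  fun l a => fderiv ℝ (fun l' => F l' a) l (Pi.single i 1)

/-- Partial derivative of `F (λ, A)` with respect to the affinity `A_i`. -/
noncomputable def pderivAff {χ : ℕ} (i : Fin χ)
    (F : (Fin χ → ℝ) → (Fin χ → ℝ) → ℝ) : (Fin χ → ℝ) → (Fin χ → ℝ) → ℝ :=
  fun l a => fderiv ℝ (fun a' => F l a') a (Pi.single i 1)

/-- Mixed partial derivative `D[α; β] F`: derivatives with respect to the counting
parameters `λ_{α₁}, …, λ_{α_m}` and the affinities `A_{β₁}, …, A_{β_n}`, evaluated at
`(λ, A) = (0, 0)`. -/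
noncomputable def Dmix {χ : ℕ} (α β : List (Fin χ))
    (F : (Fin χ → ℝ) → (Fin χ → ℝ) → ℝ) : ℝ :=
  (List.foldr pderivLam (List.foldr pderivAff F β) α) 0 0

/-!
The fluctuation relation says `f = g ∘ T` for the linear map `T (λ, A) = (A - λ, A)`, which fixes
the origin, negates the `λ`-directions and sends the `A`-direction `(0, e)` to `(e, 0) + (0, e)`.
By the chain rule, third derivatives of `f` at the origin are third derivatives of `g` there along
the transformed directions, and the relation becomes an identity for the trilinear map `D³g`,
whose only analytic input is the symmetry of second derivatives.
-/

section IteratedDerivatives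

variable {𝕜 E F : Type*} [NontriviallyNormedField 𝕜]
  [NormedAddCommGroup E] [NormedSpace 𝕜 E] [NormedAddCommGroup F] [NormedSpace 𝕜 F]

theorem differentiable_iteratedFDeriv_apply_const {n : ℕ} {G : E → F} (hG : ContDiff 𝕜 (n + 1) G)
    (m : Fin n → E) : Differentiable 𝕜 fun y => iteratedFDeriv 𝕜 n G y m :=
  (hG.differentiable_iteratedFDeriv (mod_cast n.lt_succ_self)).continuousMultilinear_apply_const m

theorem fderiv_iteratedFDeriv_apply_const {n : ℕ} {G : E → F} (hG : ContDiff 𝕜 (n + 1) G)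
    (x v : E) (m : Fin n → E) :
    fderiv 𝕜 (fun y => iteratedFDeriv 𝕜 n G y m) x v =
      iteratedFDeriv 𝕜 (n + 1) G x (Fin.cons v m) := by
  have hd : Differentiable 𝕜 (iteratedFDeriv 𝕜 n G) :=
    hG.differentiable_iteratedFDeriv (mod_cast n.lt_succ_self)
  simp [(hd x).iteratedFDeriv_succ_apply_left']

theorem fderiv_iteratedFDeriv_apply_get {vs : List E} {G : E → F}
    (hG : ContDiff 𝕜 (vs.length + 1) G) (x v : E) :
    fderiv 𝕜 (fun y => iteratedFDeriv 𝕜 vs.length G y vs.get) x v =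
      iteratedFDeriv 𝕜 (v :: vs).length G x (v :: vs).get := by
  have hget : (v :: vs).get = (Fin.cons v vs.get : Fin (vs.length + 1) → E) :=
    funext fun i => by cases i using Fin.cases <;> rfl
  rw [hget]
  exact fderiv_iteratedFDeriv_apply_const hG x v vs.get

theorem iteratedFDeriv_three_apply_get (G : E → F) (x u v w : E) :
    iteratedFDeriv 𝕜 [u, v, w].length G x [u, v, w].get =
      iteratedFDeriv 𝕜 3 G x ![u, v, w] := by
  congr 1 with i : 1
  fin_cases i <;> rfl

theorem iteratedFDeriv_three_comp_right {E' : Type*} [NormedAddCommGroup E'] [NormedSpace 𝕜 E']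
    (T : E' →L[𝕜] E) {G : E → F} (hG : ContDiff 𝕜 3 G) (x u v w : E') :
    iteratedFDeriv 𝕜 3 (G ∘ T) x ![u, v, w] = iteratedFDeriv 𝕜 3 G (T x) ![T u, T v, T w] := by
  rw [T.iteratedFDeriv_comp_right hG x le_rfl,
    ContinuousMultilinearMap.compContinuousLinearMap_apply]
  congr 1 with i : 1
  fin_cases i <;> rfl

theorem iteratedFDeriv_three_swap_right [IsRCLikeNormedField 𝕜] {G : E → F} (hG : ContDiff 𝕜 3 G)
    (x u v w : E) :
    iteratedFDeriv 𝕜 3 G x ![u, v, w] = iteratedFDeriv 𝕜 3 G x ![u, w, v] := by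
  have hG₂ : ContDiff 𝕜 2 G := hG.of_le (by norm_num)
  have hsymm (y : E) : iteratedFDeriv 𝕜 2 G y ![v, w] = iteratedFDeriv 𝕜 2 G y ![w, v] :=
    IsSymmSndFDerivAt.iteratedFDeriv_cons (hf := hG₂.contDiffAt.isSymmSndFDerivAt (by simp))
  calc iteratedFDeriv 𝕜 3 G x ![u, v, w]
      = fderiv 𝕜 (fun y => iteratedFDeriv 𝕜 2 G y ![v, w]) x u :=
        (fderiv_iteratedFDeriv_apply_const hG x u _).symm
    _ = fderiv 𝕜 (fun y => iteratedFDeriv 𝕜 2 G y ![w, v]) x u := by simp only [hsymm]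
    _ = iteratedFDeriv 𝕜 3 G x ![u, w, v] := fderiv_iteratedFDeriv_apply_const hG x u _

end IteratedDerivatives

theorem trilinear_apply_neg_add_add {R M N : Type*} [CommSemiring R] [AddCommGroup M] [Module R M]
    [AddCommGroup N] [Module R N] (t : MultilinearMap R (fun _ : Fin 3 => M) N) {a b b' c c' : M}
    (hswap : t ![a, b', c] = t ![a, c, b']) :
    t ![-a, b + b', c + c'] + t ![a, b', c'] = -t ![-a, -b, c + c'] - t ![a, c, b'] := by
  have neg₀ (y z : M) : t ![-a, y, z] = -t ![a, y, z] :=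
    congr($(t.curryLeft.map_neg a) ![y, z])
  have neg₁ (z : M) : t ![a, -b, z] = -t ![a, b, z] :=
    congr($((t.curryLeft a).curryLeft.map_neg b) ![z])
  have add₁ (z : M) : t ![a, b + b', z] = t ![a, b, z] + t ![a, b', z] :=
    congr($((t.curryLeft a).curryLeft.map_add b b') ![z])
  have add₂ : t ![a, b', c + c'] = t ![a, b', c] + t ![a, b', c'] :=
    congr($(((t.curryLeft a).curryLeft b').curryLeft.map_add c c') ![])
  simp only [neg₀, neg₁, add₁, add₂, hswap]
  abel

section FluctuationMap

variable (𝕜 V : Type*) [NontriviallyNormedField 𝕜] [NormedAddCommGroup V] [NormedSpace 𝕜 V]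

/-- The linear substitution `(λ, A) ↦ (A - λ, A)` of the fluctuation relation. -/
def fluctuationMap : V × V →L[𝕜] V × V :=
  (ContinuousLinearMap.snd 𝕜 V V - ContinuousLinearMap.fst 𝕜 V V).prod
    (ContinuousLinearMap.snd 𝕜 V V)

variable {𝕜 V}

@[simp]
theorem fluctuationMap_apply (l a : V) : fluctuationMap 𝕜 V (l, a) = (a - l, a) := rfl

theorem iteratedFDeriv_three_comp_fluctuationMap [IsRCLikeNormedField 𝕜] {W : Type*}
    [NormedAddCommGroup W] [NormedSpace 𝕜 W] {G : V × V → W} (hG : ContDiff 𝕜 3 G) {p : V × V}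
    (hp : Function.IsFixedPt (fluctuationMap 𝕜 V) p) (u v w : V) :
    iteratedFDeriv 𝕜 3 (G ∘ fluctuationMap 𝕜 V) p ![(u, 0), (0, v), (0, w)] +
        iteratedFDeriv 𝕜 3 G p ![(u, 0), (0, v), (0, w)] =
      -iteratedFDeriv 𝕜 3 (G ∘ fluctuationMap 𝕜 V) p ![(u, 0), (v, 0), (0, w)] -
        iteratedFDeriv 𝕜 3 G p ![(u, 0), (w, 0), (0, v)] := by
  have hlam (e : V) : fluctuationMap 𝕜 V (e, 0) = -(e, 0) := by simp
  have haff (e : V) : fluctuationMap 𝕜 V (0, e) = (e, 0) + (0, e) := by simp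
  simp only [iteratedFDeriv_three_comp_right _ hG, hp.eq, hlam, haff]
  exact trilinear_apply_neg_add_add (iteratedFDeriv 𝕜 3 G p).toMultilinearMap
    (iteratedFDeriv_three_swap_right hG p _ _ _)

end FluctuationMap

section PartialDerivatives

variable {χ : ℕ} {H : (Fin χ → ℝ) × (Fin χ → ℝ) → ℝ}

theorem pderivLam_curry (hH : Differentiable ℝ H) (i : Fin χ) :
    pderivLam i (Function.curry H) =
      Function.curry fun p => fderiv ℝ H p (Pi.single i 1, 0) := by
  ext l a
  exact congr($(((hH _).hasFDerivAt.comp l (hasFDerivAt_prodMk_left (𝕜 := ℝ) l a)).fderiv) _)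

theorem pderivAff_curry (hH : Differentiable ℝ H) (i : Fin χ) :
    pderivAff i (Function.curry H) =
      Function.curry fun p => fderiv ℝ H p (0, Pi.single i 1) := by
  ext l a
  exact congr($(((hH _).hasFDerivAt.comp a (hasFDerivAt_prodMk_right (𝕜 := ℝ) l a)).fderiv) _)

/-- The directions in `(λ, A)`-space along which `Dmix α β` differentiates, outermost first: the
coordinate vectors of `λ_{α₁}, …, λ_{α_m}` followed by those of `A_{β₁}, …, A_{β_n}`. -/
def mixedDirections (α β : List (Fin χ)) : List ((Fin χ → ℝ) × (Fin χ → ℝ)) :=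
  α.map (fun i => (Pi.single i 1, 0)) ++ β.map (fun i => (0, Pi.single i 1))

theorem foldr_pderiv_curry (α β : List (Fin χ))
    (hH : ContDiff ℝ (mixedDirections α β).length H) :
    α.foldr pderivLam (β.foldr pderivAff (Function.curry H)) =
      Function.curry fun p => iteratedFDeriv ℝ _ H p (mixedDirections α β).get := by
  induction α with
  | nil =>
    induction β with
    | nil => rfl
    | cons i β ih =>
      have hβ : ContDiff ℝ ((mixedDirections [] β).length + 1) H := hH
      rw [List.foldr_nil] at ih ⊢
      rw [List.foldr_cons, ih hβ.of_succ,
        pderivAff_curry (differentiable_iteratedFDeriv_apply_const hβ _)]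
      ext l a
      exact fderiv_iteratedFDeriv_apply_get hβ _ _
  | cons i α ih =>
    have hα : ContDiff ℝ ((mixedDirections α β).length + 1) H := hH
    rw [List.foldr_cons, ih hα.of_succ,
      pderivLam_curry (differentiable_iteratedFDeriv_apply_const hα _)]
    ext l a
    exact fderiv_iteratedFDeriv_apply_get hα _ _

theorem Dmix_eq_iteratedFDeriv {α β : List (Fin χ)} {F : (Fin χ → ℝ) → (Fin χ → ℝ) → ℝ}
    (hF : ContDiff ℝ (mixedDirections α β).length (Function.uncurry F)) :
    Dmix α β F = iteratedFDeriv ℝ _ (Function.uncurry F) 0 (mixedDirections α β).get :=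
  congr_fun₂ (foldr_pderiv_curry α β hF) 0 0

theorem Dmix_singleton_pair {F : (Fin χ → ℝ) → (Fin χ → ℝ) → ℝ}
    (hF : ContDiff ℝ 3 (Function.uncurry F)) (α β γ : Fin χ) :
    Dmix [α] [β, γ] F = iteratedFDeriv ℝ 3 (Function.uncurry F) 0
      ![(Pi.single α 1, 0), (0, Pi.single β 1), (0, Pi.single γ 1)] :=
  (Dmix_eq_iteratedFDeriv (α := [α]) (β := [β, γ]) hF).trans
    (iteratedFDeriv_three_apply_get _ _ _ _ _)

theorem Dmix_pair_singleton {F : (Fin χ → ℝ) → (Fin χ → ℝ) → ℝ}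
    (hF : ContDiff ℝ 3 (Function.uncurry F)) (α β γ : Fin χ) :
    Dmix [α, β] [γ] F = iteratedFDeriv ℝ 3 (Function.uncurry F) 0
      ![(Pi.single α 1, 0), (Pi.single β 1, 0), (0, Pi.single γ 1)] :=
  (Dmix_eq_iteratedFDeriv (α := [α, β]) (β := [γ]) hF).trans
    (iteratedFDeriv_three_apply_get _ _ _ _ _)

end PartialDerivatives

theorem second_response_coefficients_relation_general {χ : ℕ}
    {f g : (Fin χ → ℝ) → (Fin χ → ℝ) → ℝ} (hg : ContDiff ℝ 3 (Function.uncurry g))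
    (hFR : ∀ l A : Fin χ → ℝ, f l A = g (A - l) A) (α β γ : Fin χ) :
    Dmix [α] [β, γ] f + Dmix [α] [β, γ] g =
      - Dmix [α, β] [γ] f - Dmix [α, γ] [β] g := by
  have hfg : Function.uncurry f = Function.uncurry g ∘ fluctuationMap ℝ (Fin χ → ℝ) :=
    funext fun p => hFR p.1 p.2
  have hf : ContDiff ℝ 3 (Function.uncurry f) := hfg ▸ hg.comp_continuousLinearMap
  rw [Dmix_singleton_pair hf, Dmix_singleton_pair hg, Dmix_pair_singleton hf,
    Dmix_pair_singleton hg, hfg]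
  exact iteratedFDeriv_three_comp_fluctuationMap hg (map_zero _) _ _ _

/-- `Q_{α,βγ}(B) + Q_{α,βγ}(−B) = − Q_{αβ,γ}(B) − Q_{αγ,β}(−B)`. -/
theorem second_response_coefficients_relation {χ : ℕ} (hχ : 1 ≤ χ)
    (f g : (Fin χ → ℝ) → (Fin χ → ℝ) → ℝ)
    (hf : ContDiff ℝ (⊤ : ℕ∞) (Function.uncurry f))
    (hg : ContDiff ℝ (⊤ : ℕ∞) (Function.uncurry g))
    (hFR : ∀ l A : Fin χ → ℝ, f l A = g (A - l) A)
    (α β γ : Fin χ) :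
    Dmix [α] [β, γ] f + Dmix [α] [β, γ] g =
      - Dmix [α, β] [γ] f - Dmix [α, γ] [β] g :=
  second_response_coefficients_relation_general (contDiff_infty.1 hg 3) hFR α β γ
end

section
/- For every α : Fin χ, the first response of the second cumulant with all indices equal to α is fully specified by the second response coefficient with indices α: D[(α, α); (α)] f = D[(α); (α, α)] g − 2 · D[(α); (α, α)] f; that is, Q_{αα,α}(B) = Q_{α,αα}(−B) − 2 Q_{α,αα}(B). -/
/-!
Let `T` be the third derivative at `0` of `f` on the space of pairs `(λ, A)`, a symmetric trilinear
form. For a direction `x` of parameters put `u x = (x, 0)`, `v x = (0, x)` and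
`ξ x = u x + v x = (x, x)`. Normalization of `f` says that `f` vanishes where `λ = 0`, so
`T (v a) (v b) (v c) = 0`; normalization of `g`, read through the fluctuation relation, says that
`f` vanishes where `λ = A`, so `T (ξ a) (ξ b) (ξ c) = 0`. As `(λ, A) ↦ (A - λ, A)` sends
`u x` to `-u x = v x - ξ x` and `v x` to `ξ x`, the third derivative of `g` at `u a`, `v b`, `v c`
is `T (-u a) (ξ b) (ξ c) = T (v a) (ξ b) (ξ c)`. Expanding `ξ b` and `ξ c`, the term without `u`
drops out and what remains is a relation among third derivatives of `f` and `g`.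
-/

section DirDeriv

variable {𝕜 E E' W : Type*} [NontriviallyNormedField 𝕜]
  [NormedAddCommGroup E] [NormedSpace 𝕜 E] [NormedAddCommGroup E'] [NormedSpace 𝕜 E']
  [NormedAddCommGroup W] [NormedSpace 𝕜 W]

variable (𝕜) in
/-- The derivative of `F` in the direction `v`, as a function of the base point. It is defined
through `fderiv` rather than `lineDeriv` so that it is linear in `v` for every `F`. -/
noncomputable def dirDeriv (v : E) (F : E → W) : E → W := fun p => fderiv 𝕜 F p v

variable (𝕜) in
/-- The iterated derivative of `F` in the directions listed in `vs`, the last one being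
taken first. -/
noncomputable def iteratedDirDeriv (vs : List E) (F : E → W) : E → W :=
  vs.foldr (dirDeriv 𝕜) F

theorem iteratedDirDeriv_cons (v : E) (vs : List E) (F : E → W) :
    iteratedDirDeriv 𝕜 (v :: vs) F = dirDeriv 𝕜 v (iteratedDirDeriv 𝕜 vs F) := rfl

theorem iteratedDirDeriv_append (vs ws : List E) (F : E → W) :
    iteratedDirDeriv 𝕜 (vs ++ ws) F = iteratedDirDeriv 𝕜 vs (iteratedDirDeriv 𝕜 ws F) :=
  List.foldr_append

theorem iteratedDirDeriv_cons_add (v w : E) (vs : List E) (F : E → W) (p : E) :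
    iteratedDirDeriv 𝕜 ((v + w) :: vs) F p =
      iteratedDirDeriv 𝕜 (v :: vs) F p + iteratedDirDeriv 𝕜 (w :: vs) F p :=
  map_add (fderiv 𝕜 (iteratedDirDeriv 𝕜 vs F) p) v w

theorem iteratedDirDeriv_cons_sub (v w : E) (vs : List E) (F : E → W) (p : E) :
    iteratedDirDeriv 𝕜 ((v - w) :: vs) F p =
      iteratedDirDeriv 𝕜 (v :: vs) F p - iteratedDirDeriv 𝕜 (w :: vs) F p :=
  map_sub (fderiv 𝕜 (iteratedDirDeriv 𝕜 vs F) p) v w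

theorem iteratedDirDeriv_zero (vs : List E) : iteratedDirDeriv 𝕜 vs (0 : E → W) = 0 := by
  induction vs with
  | nil => rfl
  | cons v vs ih =>
    rw [iteratedDirDeriv_cons, ih]
    ext p
    simp [dirDeriv]

theorem contDiff_dirDeriv {n : ℕ} {F : E → W} (hF : ContDiff 𝕜 (n + 1 : ℕ) F) (v : E) :
    ContDiff 𝕜 n (dirDeriv 𝕜 v F) :=
  (hF.fderiv_right (by simp)).clm_apply contDiff_const

theorem contDiff_iteratedDirDeriv {n : ℕ} {F : E → W} {vs : List E}
    (hF : ContDiff 𝕜 (n + vs.length : ℕ) F) : ContDiff 𝕜 n (iteratedDirDeriv 𝕜 vs F) := by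
  induction vs generalizing n with
  | nil => exact hF
  | cons v vs ih =>
    refine contDiff_dirDeriv (ih ?_) v
    rwa [add_assoc, add_comm 1]

theorem differentiable_iteratedDirDeriv {F : E → W} {vs : List E}
    (hF : ContDiff 𝕜 (vs.length + 1 : ℕ) F) : Differentiable 𝕜 (iteratedDirDeriv 𝕜 vs F) := by
  have h : ContDiff 𝕜 (1 : ℕ) (iteratedDirDeriv 𝕜 vs F) :=
    contDiff_iteratedDirDeriv (by rwa [add_comm])
  exact h.differentiable (by simp)

theorem dirDeriv_comm [IsRCLikeNormedField 𝕜] {F : E → W} (hF : ContDiff 𝕜 2 F) (v w : E) :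
    dirDeriv 𝕜 v (dirDeriv 𝕜 w F) = dirDeriv 𝕜 w (dirDeriv 𝕜 v F) := by
  ext p
  have hF' : DifferentiableAt 𝕜 (fderiv 𝕜 F) p :=
    (hF.fderiv_right (m := 1) (by norm_num)).differentiable (by simp) p
  have hsecond (x y : E) : dirDeriv 𝕜 x (dirDeriv 𝕜 y F) p = fderiv 𝕜 (fderiv 𝕜 F) p x y := by
    unfold dirDeriv
    simp [fderiv_clm_apply hF' (differentiableAt_const y)]
  rw [hsecond, hsecond]
  exact (hF.contDiffAt.isSymmSndFDerivAt (by simp)).eq v w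

theorem iteratedDirDeriv_perm [IsRCLikeNormedField 𝕜] {F : E → W} {vs ws : List E}
    (h : vs.Perm ws) (hF : ContDiff 𝕜 vs.length F) :
    iteratedDirDeriv 𝕜 vs F = iteratedDirDeriv 𝕜 ws F := by
  induction h with
  | nil => rfl
  | cons v _ ih =>
    rw [iteratedDirDeriv_cons, iteratedDirDeriv_cons, ih (hF.of_le (by simp))]
  | swap v w vs =>
    refine dirDeriv_comm (contDiff_iteratedDirDeriv (n := 2) ?_) w v
    rwa [add_comm]
  | trans h _ ih₁ ih₂ => exact (ih₁ hF).trans (ih₂ (h.length_eq ▸ hF))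

theorem dirDeriv_comp {F : E → W} (hF : Differentiable 𝕜 F) (L : E' →L[𝕜] E) (v : E') :
    dirDeriv 𝕜 v (F ∘ L) = dirDeriv 𝕜 (L v) F ∘ L := by
  ext p
  simp [dirDeriv, fderiv_comp p (hF _) L.differentiableAt]

theorem iteratedDirDeriv_comp {F : E → W} (L : E' →L[𝕜] E) {vs : List E'}
    (hF : ContDiff 𝕜 vs.length F) :
    iteratedDirDeriv 𝕜 vs (F ∘ L) = iteratedDirDeriv 𝕜 (vs.map L) F ∘ L := by
  induction vs with
  | nil => rfl
  | cons v vs ih =>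
    rw [iteratedDirDeriv_cons, ih (hF.of_le (by simp)), List.map_cons, iteratedDirDeriv_cons]
    exact dirDeriv_comp (differentiable_iteratedDirDeriv (by simpa using hF)) L v

theorem iteratedDirDeriv_map_eq_zero {F : E → W} {L : E' →L[𝕜] E} (hFL : F ∘ L = 0)
    {vs : List E'} (hF : ContDiff 𝕜 vs.length F) (p : E') :
    iteratedDirDeriv 𝕜 (vs.map L) F (L p) = 0 := by
  have h := congrFun (iteratedDirDeriv_comp L hF) p
  rw [hFL, iteratedDirDeriv_zero] at h
  exact h.symm

end DirDeriv

section Reflection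

open ContinuousLinearMap (fst snd)

variable {𝕜 V W : Type*} [NontriviallyNormedField 𝕜]
  [NormedAddCommGroup V] [NormedSpace 𝕜 V] [NormedAddCommGroup W] [NormedSpace 𝕜 W]

variable (𝕜 V) in
/-- The linear map `(λ, A) ↦ (A - λ, A)` through which the fluctuation relation relates the
generating functions of the two field orientations. -/
def fluctuationReflection : V × V →L[𝕜] V × V :=
  (snd 𝕜 V V - fst 𝕜 V V).prod (snd 𝕜 V V)

theorem iteratedDirDeriv_inr_diag_diag [IsRCLikeNormedField 𝕜] {F : V × V → W}
    (hF : ContDiff 𝕜 3 F) (hzero : ∀ A, F (0, A) = 0) (a b c : V) :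
    iteratedDirDeriv 𝕜 [(0, a), (b, b), (c, c)] F 0 =
      iteratedDirDeriv 𝕜 [(b, 0), (c, 0), (0, a)] F 0 +
      iteratedDirDeriv 𝕜 [(b, 0), (0, a), (0, c)] F 0 +
      iteratedDirDeriv 𝕜 [(c, 0), (0, a), (0, b)] F 0 := by
  have hdiag (x : V) : (x, x) = (x, (0 : V)) + (0, x) := by simp
  have hswap (x y z : V × V) :
      iteratedDirDeriv 𝕜 [x, y, z] F = iteratedDirDeriv 𝕜 [y, x, z] F :=
    iteratedDirDeriv_perm (.swap y x [z]) hF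
  have hrotate (x y z : V × V) :
      iteratedDirDeriv 𝕜 [x, y, z] F = iteratedDirDeriv 𝕜 [z, x, y] F :=
    iteratedDirDeriv_perm (List.perm_append_comm (l₁ := [x, y]) (l₂ := [z])) hF
  have hvert : iteratedDirDeriv 𝕜 [(0, c), (0, b), (0, a)] F 0 = 0 :=
    iteratedDirDeriv_map_eq_zero (L := .inr 𝕜 V V) (vs := [c, b, a]) (funext hzero) hF 0
  calc
    iteratedDirDeriv 𝕜 [(0, a), (b, b), (c, c)] F 0
      = iteratedDirDeriv 𝕜 [(b, 0), (0, a), (c, c)] F 0 +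
        iteratedDirDeriv 𝕜 [(0, b), (0, a), (c, c)] F 0 := by
      rw [hswap, hdiag b, iteratedDirDeriv_cons_add]
    _ = iteratedDirDeriv 𝕜 [(c, 0), (b, 0), (0, a)] F 0 +
        iteratedDirDeriv 𝕜 [(0, c), (b, 0), (0, a)] F 0 +
        iteratedDirDeriv 𝕜 [(c, 0), (0, b), (0, a)] F 0 := by
      rw [hrotate _ _ (c, c), hrotate _ _ (c, c), hdiag c, iteratedDirDeriv_cons_add,
        iteratedDirDeriv_cons_add, hvert, add_zero]
    _ = _ := by
      rw [hswap (c, 0) (b, 0), ← hrotate (b, 0) (0, a) (0, c), hrotate (c, 0) (0, b),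
        hswap (0, a) (c, 0)]

theorem iteratedDirDeriv_comp_fluctuationReflection [IsRCLikeNormedField 𝕜] {F : V × V → W}
    (hF : ContDiff 𝕜 3 F) (hzero : ∀ A, F (0, A) = 0) (hdiag : ∀ A, F (A, A) = 0) (a b c : V) :
    iteratedDirDeriv 𝕜 [(a, 0), (0, b), (0, c)] (F ∘ fluctuationReflection 𝕜 V) 0 =
      iteratedDirDeriv 𝕜 [(b, 0), (c, 0), (0, a)] F 0 +
      iteratedDirDeriv 𝕜 [(b, 0), (0, a), (0, c)] F 0 +
      iteratedDirDeriv 𝕜 [(c, 0), (0, a), (0, b)] F 0 := by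
  have hdiag_deriv : iteratedDirDeriv 𝕜 [(a, a), (b, b), (c, c)] F 0 = 0 :=
    iteratedDirDeriv_map_eq_zero (L := (ContinuousLinearMap.id 𝕜 V).prod (.id 𝕜 V))
      (vs := [a, b, c]) (funext hdiag) hF 0
  have hneg : (-a, (0 : V)) = (0, a) - (a, a) := by simp
  calc
    iteratedDirDeriv 𝕜 [(a, 0), (0, b), (0, c)] (F ∘ fluctuationReflection 𝕜 V) 0
      = iteratedDirDeriv 𝕜 [(-a, 0), (b, b), (c, c)] F 0 := by
      rw [iteratedDirDeriv_comp _ hF]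
      simp [fluctuationReflection, ← Prod.zero_eq_mk]
    _ = iteratedDirDeriv 𝕜 [(0, a), (b, b), (c, c)] F 0 := by
      rw [hneg, iteratedDirDeriv_cons_sub, hdiag_deriv, sub_zero]
    _ = _ := iteratedDirDeriv_inr_diag_diag hF hzero a b c

end Reflection

section Dmix

open Function (uncurry)

variable {χ : ℕ} {F : (Fin χ → ℝ) → (Fin χ → ℝ) → ℝ}

theorem uncurry_pderivLam (i : Fin χ) (hF : Differentiable ℝ (uncurry F)) :
    uncurry (pderivLam i F) = dirDeriv ℝ (Pi.single i 1, 0) (uncurry F) := by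
  ext ⟨l, a⟩
  have h : HasFDerivAt (fun x => F x a) (fderiv ℝ (uncurry F) (l, a) ∘L .inl ℝ _ _) l :=
    HasFDerivAt.comp (f := fun x => (x, a)) l (hF (l, a)).hasFDerivAt
      (hasFDerivAt_prodMk_left l a)
  simp [pderivLam, dirDeriv, h.fderiv]

theorem uncurry_pderivAff (i : Fin χ) (hF : Differentiable ℝ (uncurry F)) :
    uncurry (pderivAff i F) = dirDeriv ℝ (0, Pi.single i 1) (uncurry F) := by
  ext ⟨l, a⟩
  have h : HasFDerivAt (fun x => F l x) (fderiv ℝ (uncurry F) (l, a) ∘L .inr ℝ _ _) a :=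
    HasFDerivAt.comp (f := fun x => (l, x)) a (hF (l, a)).hasFDerivAt
      (hasFDerivAt_prodMk_right l a)
  simp [pderivAff, dirDeriv, h.fderiv]

theorem uncurry_foldr_pderivLam {α : List (Fin χ)} (hF : ContDiff ℝ α.length (uncurry F)) :
    uncurry (α.foldr pderivLam F) =
      iteratedDirDeriv ℝ (α.map fun i => (Pi.single i 1, 0)) (uncurry F) := by
  induction α with
  | nil => rfl
  | cons i α ih =>
    have ih := ih (hF.of_le (by simp))
    have hdiff : Differentiable ℝ (uncurry (α.foldr pderivLam F)) :=
      ih ▸ differentiable_iteratedDirDeriv (by simpa using hF)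
    rw [List.foldr_cons, uncurry_pderivLam i hdiff, ih, List.map_cons, iteratedDirDeriv_cons]

theorem uncurry_foldr_pderivAff {β : List (Fin χ)} (hF : ContDiff ℝ β.length (uncurry F)) :
    uncurry (β.foldr pderivAff F) =
      iteratedDirDeriv ℝ (β.map fun i => (0, Pi.single i 1)) (uncurry F) := by
  induction β with
  | nil => rfl
  | cons i β ih =>
    have ih := ih (hF.of_le (by simp))
    have hdiff : Differentiable ℝ (uncurry (β.foldr pderivAff F)) :=
      ih ▸ differentiable_iteratedDirDeriv (by simpa using hF)
    rw [List.foldr_cons, uncurry_pderivAff i hdiff, ih, List.map_cons, iteratedDirDeriv_cons]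

theorem Dmix_eq_iteratedDirDeriv (α β : List (Fin χ))
    (hF : ContDiff ℝ (α.length + β.length : ℕ) (uncurry F)) :
    Dmix α β F = iteratedDirDeriv ℝ
      (α.map (fun i => (Pi.single i 1, 0)) ++ β.map fun i => (0, Pi.single i 1))
      (uncurry F) 0 := by
  have hβ := uncurry_foldr_pderivAff (β := β) (hF.of_le (by simp))
  have hα : ContDiff ℝ α.length (uncurry (β.foldr pderivAff F)) :=
    hβ ▸ contDiff_iteratedDirDeriv (by simpa using hF)
  rw [iteratedDirDeriv_append, ← hβ, ← uncurry_foldr_pderivLam hα]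
  rfl

end Dmix

theorem response_second_cumulant_same_indices_general {χ : ℕ}
    (f g : (Fin χ → ℝ) → (Fin χ → ℝ) → ℝ)
    (hf : ContDiff ℝ 3 (Function.uncurry f))
    (hFR : ∀ l A : Fin χ → ℝ, f l A = g (A - l) A)
    (hfnorm : ∀ A : Fin χ → ℝ, f 0 A = 0)
    (hgnorm : ∀ A : Fin χ → ℝ, g 0 A = 0)
    (α β γ : Fin χ) :
    Dmix [β, γ] [α] f = Dmix [α] [β, γ] g - Dmix [β] [α, γ] f - Dmix [γ] [α, β] f := by
  have hgf : Function.uncurry g = Function.uncurry f ∘ fluctuationReflection ℝ (Fin χ → ℝ) := by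
    ext ⟨l, A⟩
    simp [fluctuationReflection, hFR]
  have hg : ContDiff ℝ 3 (Function.uncurry g) :=
    hgf ▸ hf.comp (fluctuationReflection ℝ (Fin χ → ℝ)).contDiff
  have hfdiag (A : Fin χ → ℝ) : f A A = 0 := by rw [hFR, sub_self, hgnorm]
  have hreflect := iteratedDirDeriv_comp_fluctuationReflection hf hfnorm hfdiag
    (Pi.single α 1) (Pi.single β 1) (Pi.single γ 1)
  rw [Dmix_eq_iteratedDirDeriv [β, γ] [α] hf, Dmix_eq_iteratedDirDeriv [α] [β, γ] hg,
    Dmix_eq_iteratedDirDeriv [β] [α, γ] hf, Dmix_eq_iteratedDirDeriv [γ] [α, β] hf, hgf]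
  simp only [List.map_cons, List.map_nil, List.cons_append, List.nil_append]
  rw [hreflect]
  ring

/-- `Q_{αα,α}(B) = Q_{α,αα}(−B) − 2 Q_{α,αα}(B)`. -/
theorem response_second_cumulant_same_indices {χ : ℕ} (hχ : 1 ≤ χ)
    (f g : (Fin χ → ℝ) → (Fin χ → ℝ) → ℝ)
    (hf : ContDiff ℝ (⊤ : ℕ∞) (Function.uncurry f))
    (hg : ContDiff ℝ (⊤ : ℕ∞) (Function.uncurry g))
    (hFR : ∀ l A : Fin χ → ℝ, f l A = g (A - l) A)
    (hfnorm : ∀ A : Fin χ → ℝ, f 0 A = 0)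
    (hgnorm : ∀ A : Fin χ → ℝ, g 0 A = 0)
    (α : Fin χ) :
    Dmix [α, α] [α] f = Dmix [α] [α, α] g - 2 * Dmix [α] [α, α] f := by
  rw [response_second_cumulant_same_indices_general f g (contDiff_infty.1 hf 3) hFR hfnorm hgnorm]
  ring
end

section
/- For all α, β, γ, δ : Fin χ, the first responses of the third cumulants obey the symmetry D[(α, β, γ); (δ)] f + D[(α, β, γ); (δ)] g = D[(α, β, δ); (γ)] f + D[(α, β, δ); (γ)] g; that is, Q_{αβγ,δ}(B) + Q_{αβγ,δ}(−B) = Q_{αβδ,γ}(B) + Q_{αβδ,γ}(−B). -/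
/-!
Write the fluctuation relation as `f = g ∘ R`, where `R (λ, A) = (A - λ, A)` is linear. By the chain
rule a `λ`-derivative of `g ∘ R` contributes a sign, while `∂/∂A_δ` becomes `∂/∂λ_δ + ∂/∂A_δ` acting
on `g`. As `R` fixes the origin, `Q_{αβγ,δ}(B) = -Q_{αβγδ}(-B) - Q_{αβγ,δ}(-B)`, so the sum in the
theorem is `-Q_{αβγδ}(-B)`, which is symmetric in `γ` and `δ`.
-/

section DirectionalDerivatives

variable {𝕜 E F G : Type*} [NontriviallyNormedField 𝕜] [NormedAddCommGroup E] [NormedSpace 𝕜 E]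
  [NormedAddCommGroup F] [NormedSpace 𝕜 F] [NormedAddCommGroup G] [NormedSpace 𝕜 G]

theorem fderiv_comp_const_sub (f : E → F) (a x : E) :
    fderiv 𝕜 (fun y => f (a - y)) x = -fderiv 𝕜 f (a - x) := by
  have h := fderiv_comp_smul (𝕜 := 𝕜) (f := fun z => f (a + z)) (x := x) (-1)
  simpa only [neg_smul, one_smul, fderiv_comp_add_left, ← sub_eq_add_neg] using h

theorem fderiv_uncurry_apply {f : E → F → G} {x : E} {y : F}
    (hf : DifferentiableAt 𝕜 (Function.uncurry f) (x, y)) (u : E) (v : F) :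
    fderiv 𝕜 (Function.uncurry f) (x, y) (u, v) =
      fderiv 𝕜 (fun x' => f x' y) x u + fderiv 𝕜 (fun y' => f x y') y v := by
  have hx : HasFDerivAt (fun x' => f x' y) _ x :=
    hf.hasFDerivAt.comp (f := fun x' => (x', y)) x (hasFDerivAt_prodMk_left x y)
  have hy : HasFDerivAt (fun y' => f x y') _ y :=
    hf.hasFDerivAt.comp (f := fun y' => (x, y')) y (hasFDerivAt_prodMk_right x y)
  rw [hx.fderiv, hy.fderiv, ContinuousLinearMap.comp_apply, ContinuousLinearMap.comp_apply,
    ← map_add]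
  simp

theorem fderiv_fderiv_apply_comm {f : E → F} {x : E} {n : WithTop ℕ∞}
    (hf : ContDiffAt 𝕜 n f x) (hn : minSmoothness 𝕜 2 ≤ n) (u v : E) :
    fderiv 𝕜 (fun y => fderiv 𝕜 f y u) x v = fderiv 𝕜 (fun y => fderiv 𝕜 f y v) x u := by
  have hd : DifferentiableAt 𝕜 (fderiv 𝕜 f) x :=
    (hf.fderiv_right (m := 1)
      (one_add_one_eq_two.trans_le (le_minSmoothness.trans hn))).differentiableAt one_ne_zero
  have second_fderiv (w : E) : fderiv 𝕜 (fun y => fderiv 𝕜 f y w) x =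
      (fderiv 𝕜 (fderiv 𝕜 f) x).flip w := by
    rw [fderiv_clm_apply hd (differentiableAt_const w)]
    simp
  rw [second_fderiv, second_fderiv]
  exact (hf.isSymmSndFDerivAt hn).eq v u

end DirectionalDerivatives

/-- The substitution `λ ↦ A - λ` in the counting parameters, under which the fluctuation relation
reads `f = reflectLam g`. -/
def reflectLam {E G : Type*} [Sub E] (F : E → E → G) : E → E → G :=
  fun l a => F (a - l) a

section PartialDerivatives

variable {χ : ℕ} {F G : (Fin χ → ℝ) → (Fin χ → ℝ) → ℝ}

theorem contDiff_pderivLam {n : WithTop ℕ∞} {a : Fin χ → ℝ}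
    (hF : ContDiff ℝ (n + 1) fun l => F l a) (i : Fin χ) :
    ContDiff ℝ n fun l => pderivLam i F l a :=
  (hF.fderiv_right le_rfl).clm_apply contDiff_const

theorem contDiff_pderivAff {n : WithTop ℕ∞} (hF : ContDiff ℝ (n + 1) (Function.uncurry F))
    (i : Fin χ) (a : Fin χ → ℝ) :
    ContDiff ℝ n fun l => pderivAff i F l a :=
  hF.fderiv_apply contDiff_const contDiff_const le_rfl

theorem pderivLam_comm (hF : ∀ a, ContDiff ℝ 2 fun l => F l a) (i j : Fin χ) :
    pderivLam i (pderivLam j F) = pderivLam j (pderivLam i F) := by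
  funext l a
  exact fderiv_fderiv_apply_comm (hF a).contDiffAt
    (minSmoothness_of_isRCLikeNormedField (𝕜 := ℝ)).le _ _

theorem pderivLam_add (hF : ∀ a, Differentiable ℝ fun l => F l a)
    (hG : ∀ a, Differentiable ℝ fun l => G l a) (i : Fin χ) :
    pderivLam i (F + G) = pderivLam i F + pderivLam i G := by
  funext l a
  exact DFunLike.congr_fun (fderiv_add (hF a l) (hG a l)) _

theorem pderivLam_const_smul (c : ℝ) (F : (Fin χ → ℝ) → (Fin χ → ℝ) → ℝ) (i : Fin χ) :
    pderivLam i (c • F) = c • pderivLam i F := by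
  funext l a
  have hslice : fderiv ℝ (c • fun l' => F l' a) = c • fderiv ℝ fun l' => F l' a :=
    fderiv_const_smul_field c
  exact DFunLike.congr_fun (congrFun hslice l) _

theorem pderivLam_reflectLam (F : (Fin χ → ℝ) → (Fin χ → ℝ) → ℝ) (i : Fin χ) :
    pderivLam i (reflectLam F) = -reflectLam (pderivLam i F) := by
  funext l a
  exact DFunLike.congr_fun (fderiv_comp_const_sub (fun l' => F l' a) a l) _

theorem pderivAff_reflectLam (hF : Differentiable ℝ (Function.uncurry F)) (i : Fin χ) :
    pderivAff i (reflectLam F) = reflectLam (pderivLam i F + pderivAff i F) := by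
  funext l a
  have hsub : HasFDerivAt (fun a' : Fin χ → ℝ => (a' - l, a')) _ a :=
    ((hasFDerivAt_id (𝕜 := ℝ) a).sub_const l).prodMk (hasFDerivAt_id a)
  have hcomp : HasFDerivAt (fun a' => F (a' - l) a') _ a :=
    (hF (a - l, a)).hasFDerivAt.comp (f := fun a' => (a' - l, a')) a hsub
  exact (DFunLike.congr_fun hcomp.fderiv _).trans (fderiv_uncurry_apply (hF _) _ _)

theorem contDiff_foldr_pderivLam {n : WithTop ℕ∞} {a : Fin χ → ℝ} (s : List (Fin χ))
    (hF : ContDiff ℝ (n + s.length) fun l => F l a) :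
    ContDiff ℝ n fun l => s.foldr pderivLam F l a := by
  induction s generalizing n with
  | nil => simpa using hF
  | cons i s ih =>
    refine contDiff_pderivLam (ih ?_) i
    simpa [add_assoc, add_comm (1 : WithTop ℕ∞)] using hF

theorem foldr_pderivLam_add (s : List (Fin χ)) (hF : ∀ a, ContDiff ℝ s.length fun l => F l a)
    (hG : ∀ a, ContDiff ℝ s.length fun l => G l a) :
    s.foldr pderivLam (F + G) = s.foldr pderivLam F + s.foldr pderivLam G := by
  induction s with
  | nil => rfl
  | cons i s ih =>
    have hlen : ((i :: s).length : WithTop ℕ∞) = 1 + s.length := by simp [add_comm]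
    rw [hlen] at hF hG
    simp only [List.foldr_cons]
    rw [ih (fun a => (hF a).of_le le_add_self) (fun a => (hG a).of_le le_add_self),
      pderivLam_add
        (fun a => (contDiff_foldr_pderivLam s (hF a)).differentiable one_ne_zero)
        (fun a => (contDiff_foldr_pderivLam s (hG a)).differentiable one_ne_zero)]

theorem foldr_pderivLam_reflectLam (F : (Fin χ → ℝ) → (Fin χ → ℝ) → ℝ) (s : List (Fin χ)) :
    s.foldr pderivLam (reflectLam F) =
      (-1 : ℝ) ^ s.length • reflectLam (s.foldr pderivLam F) := by
  induction s with
  | nil => simp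
  | cons i s ih =>
    rw [List.foldr_cons, ih, pderivLam_const_smul, pderivLam_reflectLam, List.foldr_cons,
      List.length_cons, pow_succ, mul_neg_one, neg_smul, smul_neg]

theorem Dmix_reflectLam (s : List (Fin χ)) (δ : Fin χ)
    (hF : ContDiff ℝ (s.length + 1) (Function.uncurry F)) :
    Dmix s [δ] (reflectLam F) = (-1) ^ s.length * (Dmix (s ++ [δ]) [] F + Dmix s [δ] F) := by
  have hLam : ∀ a, ContDiff ℝ s.length fun l => pderivLam δ F l a := fun a =>
    contDiff_pderivLam (F := F) (hF.comp (contDiff_prodMk_left a)) δ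
  simp only [Dmix, List.foldr_cons, List.foldr_nil, List.foldr_append]
  rw [pderivAff_reflectLam (hF.differentiable (by simp)), foldr_pderivLam_reflectLam,
    foldr_pderivLam_add s hLam (contDiff_pderivAff hF δ)]
  simp [reflectLam]

theorem Dmix_append_pair_comm (hF : ∀ a, ContDiff ℝ 2 fun l => F l a) (s : List (Fin χ))
    (γ δ : Fin χ) :
    Dmix (s ++ [γ, δ]) [] F = Dmix (s ++ [δ, γ]) [] F := by
  simp only [Dmix, List.foldr_append, List.foldr_cons, List.foldr_nil, pderivLam_comm hF γ δ]

theorem symmetry_responses_third_cumulants_general {f g : (Fin χ → ℝ) → (Fin χ → ℝ) → ℝ}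
    (s : List (Fin χ)) (hg : ContDiff ℝ (s.length + 2) (Function.uncurry g))
    (hFR : ∀ l A : Fin χ → ℝ, f l A = g (A - l) A) (γ δ : Fin χ) :
    Dmix (s ++ [γ]) [δ] f + (-1) ^ s.length * Dmix (s ++ [γ]) [δ] g =
      Dmix (s ++ [δ]) [γ] f + (-1) ^ s.length * Dmix (s ++ [δ]) [γ] g := by
  obtain rfl : f = reflectLam g := funext₂ hFR
  have response_combination (i j : Fin χ) :
      Dmix (s ++ [i]) [j] (reflectLam g) + (-1) ^ s.length * Dmix (s ++ [i]) [j] g =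
        -(-1) ^ s.length * Dmix (s ++ [i, j]) [] g := by
    rw [Dmix_reflectLam (s ++ [i]) j (by simpa [add_assoc, one_add_one_eq_two] using hg)]
    simp only [List.length_append, List.length_singleton, List.append_assoc, List.cons_append,
      List.nil_append]
    ring
  have hslice : ∀ a, ContDiff ℝ 2 fun l => g l a := fun a =>
    (hg.of_le le_add_self).comp (contDiff_prodMk_left a)
  rw [response_combination, response_combination, Dmix_append_pair_comm hslice]

end PartialDerivatives

/-- `Q_{αβγ,δ}(B) + Q_{αβγ,δ}(−B) = Q_{αβδ,γ}(B) + Q_{αβδ,γ}(−B)`. -/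
theorem symmetry_responses_third_cumulants {χ : ℕ} (hχ : 1 ≤ χ)
    (f g : (Fin χ → ℝ) → (Fin χ → ℝ) → ℝ)
    (hf : ContDiff ℝ (⊤ : ℕ∞) (Function.uncurry f))
    (hg : ContDiff ℝ (⊤ : ℕ∞) (Function.uncurry g))
    (hFR : ∀ l A : Fin χ → ℝ, f l A = g (A - l) A)
    (α β γ δ : Fin χ) :
    Dmix [α, β, γ] [δ] f + Dmix [α, β, γ] [δ] g =
      Dmix [α, β, δ] [γ] f + Dmix [α, β, δ] [γ] g := by
  simpa using symmetry_responses_third_cumulants_general [α, β]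
    (mod_cast contDiff_infty.1 hg ([α, β].length + 2)) hFR γ δ
end
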